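/- Let n ≥ 3, let η ∈ ℝ^{n-1}, let δ > 0, and let A be a symmetric (n−1)×(n−1) complex matrix. If Ŷᵀ A Ŷ = 0 for every unit vector Ŷ ∈ ℝ^{n-1} with |η·Ŷ| < δ, then A = 0. -/

import Mathlib

open scoped BigOperators

/-!
By homogeneity the quadratic form `q(Y) = Yᵀ A Y` vanishes on the open cone `|η·Y| < δ|Y|`
(`quad_eq_zero_of_cone`). Since the dimension is at least two, this cone contains a nonzero
vector `Y₀ ⊥ η` (`exists_orthogonal`). For any `V` and small `t > 0`, the vectors `Y₀`,
`Y₀ + tV` and `Y₀ - tV` all lie in the cone, so the parallelogram identity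
`q(Y₀ + tV) + q(Y₀ - tV) = 2 q(Y₀) + 2 t² q(V)` gives `q(V) = 0`. Thus `q` vanishes identically,
and evaluating it at `eⱼ` and `eⱼ + eₖ` shows that the symmetric matrix `A` is zero.
-/

/-- The complex quadratic form `Yᵀ A Y` of `A`, evaluated at a real vector `Y`. -/
noncomputable def quadForm {m : ℕ} (A : Matrix (Fin m) (Fin m) ℂ) (Y : Fin m → ℝ) : ℂ :=
  ∑ j, ∑ k, (Y j : ℂ) * A j k * (Y k : ℂ)

lemma quadForm_smul {m : ℕ} (A : Matrix (Fin m) (Fin m) ℂ) (c : ℝ) (Y : Fin m → ℝ) :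
    quadForm A (c • Y) = (c : ℂ) ^ 2 * quadForm A Y := by
  simp only [quadForm, Finset.mul_sum]
  refine Finset.sum_congr rfl fun j _ => Finset.sum_congr rfl fun k _ => ?_
  simp only [Pi.smul_apply, smul_eq_mul]
  push_cast
  ring

lemma quadForm_parallelogram {m : ℕ} (A : Matrix (Fin m) (Fin m) ℂ) (Y V : Fin m → ℝ) (t : ℝ) :
    quadForm A (Y + t • V) + quadForm A (Y + (-t) • V) =
      2 * quadForm A Y + 2 * (t : ℂ) ^ 2 * quadForm A V := by
  simp only [quadForm, Finset.mul_sum, ← Finset.sum_add_distrib]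
  refine Finset.sum_congr rfl fun j _ => Finset.sum_congr rfl fun k _ => ?_
  simp only [Pi.add_apply, Pi.smul_apply, smul_eq_mul]
  push_cast
  ring

lemma quad_eq_zero_of_cone {m : ℕ} {η : Fin m → ℝ} {δ : ℝ} (hδ : 0 < δ)
    {A : Matrix (Fin m) (Fin m) ℂ}
    (hvan : ∀ Y : Fin m → ℝ, (∑ j, Y j ^ 2) = 1 → |∑ j, η j * Y j| < δ → quadForm A Y = 0)
    (Y : Fin m → ℝ) (hY : |∑ j, η j * Y j| < δ * √(∑ j, Y j ^ 2)) :
    quadForm A Y = 0 := by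
  set r := √(∑ j, Y j ^ 2) with hr
  -- The strict inequality already forces `Y ≠ 0`.
  have hr0 : 0 < r := pos_of_mul_pos_right ((abs_nonneg _).trans_lt hY) hδ.le
  have hsq : r ^ 2 = ∑ j, Y j ^ 2 := Real.sq_sqrt (Finset.sum_nonneg fun j _ => sq_nonneg _)
  have h := hvan (r⁻¹ • Y) ?_ ?_
  · rw [quadForm_smul] at h
    have : ((r⁻¹ : ℝ) : ℂ) ^ 2 ≠ 0 := by
      exact_mod_cast pow_ne_zero 2 (inv_ne_zero hr0.ne')
    exact (mul_eq_zero.1 h).resolve_left this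
  · simp only [Pi.smul_apply, smul_eq_mul, mul_pow, ← Finset.mul_sum, ← hsq]
    field_simp
  · simp only [Pi.smul_apply, smul_eq_mul, mul_left_comm _ r⁻¹, ← Finset.mul_sum]
    rw [abs_mul, abs_of_pos (inv_pos.2 hr0), inv_mul_lt_iff₀ hr0, mul_comm]
    exact hY

lemma exists_orthogonal {m : ℕ} (hm : 2 ≤ m) (η : Fin m → ℝ) :
    ∃ Y : Fin m → ℝ, ∑ j, η j * Y j = 0 ∧ 0 < ∑ j, Y j ^ 2 := by
  let i : Fin m := ⟨0, by omega⟩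
  let k : Fin m := ⟨1, by omega⟩
  have hik : i ≠ k := by simp [i, k]
  obtain ⟨a, b, hab, hne⟩ : ∃ a b : ℝ, η i * a + η k * b = 0 ∧ (a ≠ 0 ∨ b ≠ 0) := by
    by_cases h : η i = 0
    · exact ⟨1, 0, by simp [h], by simp⟩
    · exact ⟨η k, -η i, by ring, by simp [h]⟩
  refine ⟨Pi.single i a + Pi.single k b, ?_, ?_⟩
  · simpa [mul_add, Finset.sum_add_distrib, Pi.single_apply] using hab
  · rcases hne with h | h
    · refine Finset.sum_pos' (fun j _ => sq_nonneg _) ⟨i, Finset.mem_univ _, ?_⟩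
      simp [Pi.single_apply, hik]
      positivity
    · refine Finset.sum_pos' (fun j _ => sq_nonneg _) ⟨k, Finset.mem_univ _, ?_⟩
      simp [Pi.single_apply, hik.symm]
      positivity

lemma quadForm_eq_zero {m : ℕ} (hm : 2 ≤ m) {η : Fin m → ℝ} {δ : ℝ} (hδ : 0 < δ)
    {A : Matrix (Fin m) (Fin m) ℂ}
    (hvan : ∀ Y : Fin m → ℝ, (∑ j, Y j ^ 2) = 1 → |∑ j, η j * Y j| < δ → quadForm A Y = 0)
    (V : Fin m → ℝ) : quadForm A V = 0 := by
  obtain ⟨Y, hY0, hY⟩ := exists_orthogonal hm η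
  have hcone : ∀ᶠ t : ℝ in nhds 0, |∑ j, η j * (Y + t • V) j| <
      δ * √(∑ j, (Y + t • V) j ^ 2) := by
    refine ContinuousAt.eventually_lt ?_ ?_ ?_
    · simp only [Pi.add_apply, Pi.smul_apply, smul_eq_mul]
      fun_prop
    · simp only [Pi.add_apply, Pi.smul_apply, smul_eq_mul]
      fun_prop
    · simp only [zero_smul, add_zero, hY0, abs_zero]
      positivity
  obtain ⟨ε, hε, hball⟩ := Metric.eventually_nhds_iff.1 hcone
  have hz : ∀ t : ℝ, |t| < ε → quadForm A (Y + t • V) = 0 := fun t ht =>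
    quad_eq_zero_of_cone hδ hvan _ (hball (by simpa using ht))
  have hq0 : quadForm A Y = 0 := by simpa using hz 0 (by simpa using hε)
  have habs : |ε / 2| < ε := by rw [abs_of_pos (by positivity)]; linarith
  have h := quadForm_parallelogram A Y V (ε / 2)
  rw [hz _ habs, hz _ (by rwa [abs_neg]), hq0] at h
  have hne : (2 : ℂ) * ((ε / 2 : ℝ) : ℂ) ^ 2 ≠ 0 :=
    mul_ne_zero two_ne_zero (pow_ne_zero 2 (Complex.ofReal_ne_zero.2 (by positivity)))
  simp only [mul_zero, zero_add, add_zero] at h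
  exact (mul_eq_zero.1 h.symm).resolve_left hne

/-- if a symmetric complex `(n-1)×(n-1)` matrix `A` satisfies
`Ŷᵀ A Ŷ = 0` for every unit vector `Ŷ ∈ ℝ^{n-1}` with `|η·Ŷ| < δ`, then
`A = 0`. -/
theorem stmt_5 (n : ℕ) (hn : 3 ≤ n) (η : Fin (n - 1) → ℝ) (δ : ℝ) (hδ : 0 < δ)
    (A : Matrix (Fin (n - 1)) (Fin (n - 1)) ℂ) (hA : A.IsSymm)
    (hvan : ∀ Y : Fin (n - 1) → ℝ, (∑ j, Y j ^ 2) = 1 →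
      |∑ j, η j * Y j| < δ →
      (∑ j, ∑ k, (Y j : ℂ) * A j k * (Y k : ℂ)) = 0) :
    A = 0 := by
  have hq : ∀ V, quadForm A V = 0 := quadForm_eq_zero (by omega) hδ hvan
  have hdiag : ∀ j, A j j = 0 := fun j => by
    simpa [quadForm, Pi.single_apply, apply_ite Complex.ofReal] using hq (Pi.single j 1)
  ext j k
  have h := hq (Pi.single j 1 + Pi.single k 1)
  simp [quadForm, Pi.single_apply, apply_ite Complex.ofReal, add_mul, mul_add,
    Finset.sum_add_distrib, hdiag, hA.apply j k] at h
  simpa using h
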